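/- arXiv:math/0611762 — 4 statements merged into one kernel-verified Lean document; each statement's English description precedes it below -/
import Mathlib

section
/- Let n be a positive integer, let x and a be integers with 0 < x < −a (so a ≤ −2), and let H2 > 0 be a real number. Then (n·x/(1 − n·a))·(H2/2) < (−x/a)·(H2/2), so the open interval ((n·x/(1 − n·a))·(H2/2), (−x/a)·(H2/2)) is nonempty; and for every real number z in this interval the following three inequalities hold simultaneously: n·(x·H2 + 2·z·a) − 2·z < 0, n·(x·H2 + 2·z·a) − H2 < 0, and x·H2 + 2·z·a > 0. -/
/-- Numerical core of Proposition 4.2(i): for `0 < x < -a` and `H2 > 0`, the interval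
`((n·x/(1 − n·a))·(H2/2), (−x/a)·(H2/2))` is nonempty, and every `z` in it satisfies
the three slope inequalities. -/
theorem enriques_stability_range_x_pos (n : ℕ) (hn : 0 < n) (x a : ℤ)
    (hx : 0 < x) (hxa : x < -a) (H2 : ℝ) (hH2 : 0 < H2) :
    ((n : ℝ) * x / (1 - n * a)) * (H2 / 2) < (-(x : ℝ) / a) * (H2 / 2) ∧
    ∀ z : ℝ, ((n : ℝ) * x / (1 - n * a)) * (H2 / 2) < z →
      z < (-(x : ℝ) / a) * (H2 / 2) →
      (n : ℝ) * ((x : ℝ) * H2 + 2 * z * a) - 2 * z < 0 ∧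
      (n : ℝ) * ((x : ℝ) * H2 + 2 * z * a) - H2 < 0 ∧
      (x : ℝ) * H2 + 2 * z * a > 0 := by
  have hnR : (0 : ℝ) < n := by exact_mod_cast hn
  have hxR : (0 : ℝ) < x := by exact_mod_cast hx
  have hxaR : (x : ℝ) < -a := by exact_mod_cast hxa
  generalize (n : ℝ) = m at *
  generalize (x : ℝ) = y at *
  obtain ⟨b, hb⟩ : ∃ b : ℝ, b = -(a : ℝ) := ⟨_, rfl⟩
  have ha : (a : ℝ) = -b := by linarith
  rw [ha]
  rw [← hb] at hxaR
  have hb0 : 0 < b := hxR.trans hxaR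
  have hmb : 0 < m * b := mul_pos hnR hb0
  have hd : 0 < 1 - m * -b := by linarith
  rw [neg_div_neg_eq]
  refine ⟨?_, ?_⟩
  · apply mul_lt_mul_of_pos_right _ (by linarith)
    rw [div_lt_div_iff₀ hd hb0]
    nlinarith
  · intro z h1 h2
    rw [div_mul_eq_mul_div, div_lt_iff₀ hd] at h1
    rw [div_mul_eq_mul_div, lt_div_iff₀ hb0] at h2
    have hf : m * (y * H2 + 2 * z * -b) - 2 * z < 0 := by nlinarith
    have hz : 2 * z < H2 := by
      have h3 : y * H2 < b * H2 := mul_lt_mul_of_pos_right hxaR hH2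
      have h4 : (2 * z) * b < H2 * b := by linarith
      exact lt_of_mul_lt_mul_right h4 hb0.le
    exact ⟨hf, by linarith, by linarith⟩
end

section
/- Let n be a positive integer, let x and a be integers with −a < x < 0 (so a ≥ 2), and let H2 > 0 be a real number. Then ((−x)/a)·(H2/2) < (n·x/(1 − n·a))·(H2/2), so the open interval (((−x)/a)·(H2/2), (n·x/(1 − n·a))·(H2/2)) is nonempty; and for every real number z in this interval the following three inequalities hold simultaneously: n·(x·H2 + 2·z·a) − 2·z < 0, n·(x·H2 + 2·z·a) − H2 < 0, and x·H2 + 2·z·a > 0. -/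
/-- Numerical core of Proposition 4.2(ii): for `−a < x < 0` and `H2 > 0`, the interval
`(((−x)/a)·(H2/2), (n·x/(1 − n·a))·(H2/2))` is nonempty, and every `z` in it satisfies
the three slope inequalities. -/
theorem enriques_stability_range_x_neg (n : ℕ) (hn : 0 < n) (x a : ℤ)
    (hax : -a < x) (hx : x < 0) (H2 : ℝ) (hH2 : 0 < H2) :
    (-(x : ℝ) / a) * (H2 / 2) < ((n : ℝ) * x / (1 - n * a)) * (H2 / 2) ∧
    ∀ z : ℝ, (-(x : ℝ) / a) * (H2 / 2) < z →
      z < ((n : ℝ) * x / (1 - n * a)) * (H2 / 2) →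
      (n : ℝ) * ((x : ℝ) * H2 + 2 * z * a) - 2 * z < 0 ∧
      (n : ℝ) * ((x : ℝ) * H2 + 2 * z * a) - H2 < 0 ∧
      (x : ℝ) * H2 + 2 * z * a > 0 := by
  have hn1 : (1 : ℝ) ≤ n := by exact_mod_cast hn
  have hx0 : (x : ℝ) < 0 := by exact_mod_cast hx
  have hax1 : -(x : ℝ) + 1 ≤ a := by
    have : -x + 1 ≤ a := by omega
    exact_mod_cast this
  have hx1 : (x : ℝ) ≤ -1 := by
    have : x ≤ -1 := by omega
    exact_mod_cast this
  have ha : (0 : ℝ) < a := by linarith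
  have hD : (0 : ℝ) < n * a - 1 := by nlinarith
  have hr : (n : ℝ) * x / (1 - n * a) = n * (-x) / (n * a - 1) := by
    rw [← neg_div_neg_eq]
    congr 1 <;> ring
  rw [hr]
  refine ⟨?_, ?_⟩
  · apply mul_lt_mul_of_pos_right _ (by linarith)
    rw [div_lt_div_iff₀ ha hD]
    nlinarith
  · intro z h1 h2
    have e1 : -(x : ℝ) / a * (H2 / 2) = (-x * (H2 / 2)) / a := by ring
    have e2 : (n : ℝ) * (-x) / (n * a - 1) * (H2 / 2)
        = (n * (-x) * (H2 / 2)) / (n * a - 1) := by ring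
    rw [e1, div_lt_iff₀ ha] at h1
    rw [e2, lt_div_iff₀ hD] at h2
    have h3 : (n : ℝ) * ((x : ℝ) * H2 + 2 * z * a) - 2 * z < 0 := by nlinarith
    have h4 : (n : ℝ) * (-x) ≤ n * a - 1 := by nlinarith
    have h5 : z < H2 / 2 := by
      have : (n : ℝ) * (-x) * (H2 / 2) ≤ (n * a - 1) * (H2 / 2) :=
        mul_le_mul_of_nonneg_right h4 (by linarith)
      have h6 : z * (n * a - 1) < (H2 / 2) * (n * a - 1) := by linarith
      exact lt_of_mul_lt_mul_right h6 hD.le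
    exact ⟨h3, by linarith, by linarith⟩
end

section
/- Let n be a positive integer, let x, a, c be integers with 0 < x < −a and c ≥ 1, and let h > 0 be a real number. Set L := n·x·h²·c/(n·(x·c − a) + 1) and U := x·h²·c/(x·c − a). Then 0 < L < U < h²; there exists a real z with 0 < z < h and L < (2·h − z)·z < U; and for every real z with 0 < z < h and L < (2·h − z)·z < U the following three inequalities hold simultaneously: n·x·h²·c + (n·a − 1 − n·x·c)·(2·h − z)·z < 0, (n·x − 1)·h²·c + (n·a + c − n·x·c)·(2·h − z)·z < 0, and x·h²·c + (a − x·c)·(2·h − z)·z > 0. -/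
/-- Numerical core of Proposition 5.2(i): for `0 < x < -a`, `c ≥ 1`, `h > 0`, with
`L = n·x·h²·c/(n·(x·c − a) + 1)` and `U = x·h²·c/(x·c − a)`, one has `0 < L < U < h²`,
some `z ∈ (0, h)` satisfies `L < (2h − z)z < U`, and every such `z` satisfies the three
slope inequalities. -/
theorem delPezzo_stability_range_x_pos (n : ℕ) (hn : 0 < n) (x a c : ℤ)
    (hx : 0 < x) (hxa : x < -a) (hc : 1 ≤ c) (h : ℝ) (hh : 0 < h) :
    (0 < (n : ℝ) * x * h ^ 2 * c / ((n : ℝ) * ((x : ℝ) * c - a) + 1) ∧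
      (n : ℝ) * x * h ^ 2 * c / ((n : ℝ) * ((x : ℝ) * c - a) + 1) <
        (x : ℝ) * h ^ 2 * c / ((x : ℝ) * c - a) ∧
      (x : ℝ) * h ^ 2 * c / ((x : ℝ) * c - a) < h ^ 2) ∧
    (∃ z : ℝ, 0 < z ∧ z < h ∧
      (n : ℝ) * x * h ^ 2 * c / ((n : ℝ) * ((x : ℝ) * c - a) + 1) < (2 * h - z) * z ∧
      (2 * h - z) * z < (x : ℝ) * h ^ 2 * c / ((x : ℝ) * c - a)) ∧
    ∀ z : ℝ, 0 < z → z < h →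
      (n : ℝ) * x * h ^ 2 * c / ((n : ℝ) * ((x : ℝ) * c - a) + 1) < (2 * h - z) * z →
      (2 * h - z) * z < (x : ℝ) * h ^ 2 * c / ((x : ℝ) * c - a) →
      ((n : ℝ) * x * h ^ 2 * c + ((n : ℝ) * a - 1 - (n : ℝ) * x * c) * ((2 * h - z) * z) < 0 ∧
       ((n : ℝ) * x - 1) * h ^ 2 * c + ((n : ℝ) * a + c - (n : ℝ) * x * c) * ((2 * h - z) * z) < 0 ∧
       (x : ℝ) * h ^ 2 * c + ((a : ℝ) - x * c) * ((2 * h - z) * z) > 0) := by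
  have hn' : (0 : ℝ) < n := by exact_mod_cast hn
  have hx' : (0 : ℝ) < x := by exact_mod_cast hx
  have hxa' : (x : ℝ) < -a := by exact_mod_cast hxa
  have hc' : (1 : ℝ) ≤ c := by exact_mod_cast hc
  have hc0 : (0 : ℝ) < c := by linarith
  have hxc : (0 : ℝ) < x * c := by positivity
  have hD : (0 : ℝ) < (x : ℝ) * c - a := by linarith
  have hE : (0 : ℝ) < (n : ℝ) * ((x : ℝ) * c - a) + 1 := by positivity
  have hP : (0 : ℝ) < (x : ℝ) * h ^ 2 * c := by positivity
  have hL : 0 < (n : ℝ) * x * h ^ 2 * c / ((n : ℝ) * ((x : ℝ) * c - a) + 1) := by positivity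
  have hLU : (n : ℝ) * x * h ^ 2 * c / ((n : ℝ) * ((x : ℝ) * c - a) + 1) <
        (x : ℝ) * h ^ 2 * c / ((x : ℝ) * c - a) := by
    rw [div_lt_div_iff₀ hE hD]
    linarith
  have hh2 : 0 < h ^ 2 := by positivity
  have hU : (x : ℝ) * h ^ 2 * c / ((x : ℝ) * c - a) < h ^ 2 := by
    rw [div_lt_iff₀ hD]
    nlinarith [mul_pos hh2 (show (0 : ℝ) < -a by linarith)]
  refine ⟨⟨hL, hLU, hU⟩, ?_, ?_⟩
  · obtain ⟨m, hm1, hm2⟩ := exists_between hLU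
    have hs : 0 < h ^ 2 - m := by linarith
    have hs1 : 0 < √(h ^ 2 - m) := Real.sqrt_pos.mpr hs
    have hs2 : √(h ^ 2 - m) ^ 2 = h ^ 2 - m := Real.sq_sqrt hs.le
    have hs3 : √(h ^ 2 - m) < h := by
      rw [Real.sqrt_lt' hh]
      linarith
    have he : (2 * h - (h - √(h ^ 2 - m))) * (h - √(h ^ 2 - m)) = m := by
      linear_combination -hs2
    refine ⟨h - √(h ^ 2 - m), by linarith, by linarith, ?_, ?_⟩
    · rw [he]; exact hm1
    · rw [he]; exact hm2
  · intro z hz hzh h1 h2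
    have ht : 0 < (2 * h - z) * z := mul_pos (by linarith) hz
    generalize (2 * h - z) * z = t at *
    rw [div_lt_iff₀ hE] at h1
    rw [lt_div_iff₀ hD] at h2
    have key : (1 + c) * t < h ^ 2 * c := by
      have h3 : x * ((1 + c) * t) < x * (h ^ 2 * c) := by
        nlinarith [mul_pos ht (show (0 : ℝ) < -a - x by linarith)]
      exact lt_of_mul_lt_mul_left h3 hx'.le
    refine ⟨by linarith, by linarith, by linarith⟩
end

section
/- Let n be a positive integer, let x, a, c be integers with −a < x < 0 and c ≥ 1, and let h > 0 be a real number. Set L := x·h²·c/(x·c − a) and U := n·x·h²·c/(n·(x·c − a) + 1). Then 0 < L < U < h²; there exists a real z with 0 < z < h and L < (2·h − z)·z < U; and for every real z with 0 < z < h and L < (2·h − z)·z < U the following three inequalities hold simultaneously: n·x·h²·c + (n·a − 1 − n·x·c)·(2·h − z)·z < 0, (n·x − 1)·h²·c + (n·a + c − n·x·c)·(2·h − z)·z < 0, and x·h²·c + (a − x·c)·(2·h − z)·z > 0. -/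
/-- Numerical core of Proposition 5.2(ii): for `−a < x < 0`, `c ≥ 1`, `h > 0`, with
`L = x·h²·c/(x·c − a)` and `U = n·x·h²·c/(n·(x·c − a) + 1)`, one has `0 < L < U < h²`,
some `z ∈ (0, h)` satisfies `L < (2h − z)z < U`, and every such `z` satisfies the three
slope inequalities. -/
theorem delPezzo_stability_range_x_neg (n : ℕ) (hn : 0 < n) (x a c : ℤ)
    (hax : -a < x) (hx : x < 0) (hc : 1 ≤ c) (h : ℝ) (hh : 0 < h) :
    (0 < (x : ℝ) * h ^ 2 * c / ((x : ℝ) * c - a) ∧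
      (x : ℝ) * h ^ 2 * c / ((x : ℝ) * c - a) <
        (n : ℝ) * x * h ^ 2 * c / ((n : ℝ) * ((x : ℝ) * c - a) + 1) ∧
      (n : ℝ) * x * h ^ 2 * c / ((n : ℝ) * ((x : ℝ) * c - a) + 1) < h ^ 2) ∧
    (∃ z : ℝ, 0 < z ∧ z < h ∧
      (x : ℝ) * h ^ 2 * c / ((x : ℝ) * c - a) < (2 * h - z) * z ∧
      (2 * h - z) * z < (n : ℝ) * x * h ^ 2 * c / ((n : ℝ) * ((x : ℝ) * c - a) + 1)) ∧
    ∀ z : ℝ, 0 < z → z < h →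
      (x : ℝ) * h ^ 2 * c / ((x : ℝ) * c - a) < (2 * h - z) * z →
      (2 * h - z) * z < (n : ℝ) * x * h ^ 2 * c / ((n : ℝ) * ((x : ℝ) * c - a) + 1) →
      ((n : ℝ) * x * h ^ 2 * c + ((n : ℝ) * a - 1 - (n : ℝ) * x * c) * ((2 * h - z) * z) < 0 ∧
       ((n : ℝ) * x - 1) * h ^ 2 * c + ((n : ℝ) * a + c - (n : ℝ) * x * c) * ((2 * h - z) * z) < 0 ∧
       (x : ℝ) * h ^ 2 * c + ((a : ℝ) - x * c) * ((2 * h - z) * z) > 0) := by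
  have hN : (1 : ℝ) ≤ n := by exact_mod_cast hn
  have hX : (x : ℝ) ≤ -1 := by exact_mod_cast (by omega : x ≤ -1)
  have hA : 1 - (x : ℝ) ≤ a := by exact_mod_cast (by omega : 1 - x ≤ a)
  have hC : (1 : ℝ) ≤ c := by exact_mod_cast hc
  generalize (n : ℝ) = N at *
  generalize (x : ℝ) = X at *
  generalize (a : ℝ) = A at *
  generalize (c : ℝ) = C at *
  obtain ⟨p, rfl⟩ : ∃ p, X = -p := ⟨-X, by ring⟩
  have hp : 1 ≤ p := by linarith
  have hh2 : 0 < h ^ 2 := by positivity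
  have hpC : 0 < p * C := by positivity
  have hq : 0 < A + p * C := by linarith
  have hNA : N * p + 1 ≤ N * A := by nlinarith
  have hNp : 1 ≤ N * p := by nlinarith
  have hNpC : 0 < N * (p * C) := by positivity
  have hr : 0 < N * (A + p * C) - 1 := by nlinarith
  have eL : -p * h ^ 2 * C / (-p * C - A) = p * C * h ^ 2 / (A + p * C) := by
    rw [← neg_div_neg_eq]; congr 1 <;> ring
  have eU : N * -p * h ^ 2 * C / (N * (-p * C - A) + 1)
      = N * (p * C) * h ^ 2 / (N * (A + p * C) - 1) := by
    rw [← neg_div_neg_eq]; congr 1 <;> ring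
  rw [eL, eU]
  have h1 : 0 < p * C * h ^ 2 / (A + p * C) := by positivity
  have h2 : p * C * h ^ 2 / (A + p * C) < N * (p * C) * h ^ 2 / (N * (A + p * C) - 1) := by
    rw [div_lt_div_iff₀ hq hr]
    have : 0 < p * C * h ^ 2 := by positivity
    nlinarith
  have h3 : N * (p * C) * h ^ 2 / (N * (A + p * C) - 1) < h ^ 2 := by
    rw [div_lt_iff₀ hr]
    have : N * (p * C) < N * (A + p * C) - 1 := by nlinarith
    nlinarith
  refine ⟨⟨h1, h2, h3⟩, ?_, ?_⟩
  · obtain ⟨w, hw1, hw2⟩ := exists_between h2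
    have hs : 0 < h ^ 2 - w := by linarith
    have hsq := Real.sq_sqrt hs.le
    have hpos := Real.sqrt_pos.2 hs
    have e : (2 * h - (h - √(h ^ 2 - w))) * (h - √(h ^ 2 - w)) = w := by
      linear_combination -hsq
    refine ⟨h - √(h ^ 2 - w), ?_, by linarith, by rwa [e], by rwa [e]⟩
    have : √(h ^ 2 - w) < h := by
      rw [Real.sqrt_lt' hh]; linarith
    linarith
  · intro z hz hzh hl hu
    generalize (2 * h - z) * z = w at *
    rw [div_lt_iff₀ hq] at hl
    have hu' := hu
    rw [lt_div_iff₀ hr] at hu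
    refine ⟨by linarith, ?_, by linarith⟩
    have hd : 0 < N * A + C + N * (p * C) := by nlinarith
    have key : N * (p * C) * h ^ 2 / (N * (A + p * C) - 1)
        ≤ (N * p + 1) * C * h ^ 2 / (N * A + C + N * (p * C)) := by
      rw [div_le_div_iff₀ hr hd]
      have : 0 ≤ (C * h ^ 2) * (N * A - N * p - 1) :=
        mul_nonneg (by positivity) (by linarith)
      linarith
    have := lt_of_lt_of_le hu' key
    rw [lt_div_iff₀ hd] at this
    linarith
end
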